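/- Let R be a Cohen-Macaulay commutative noetherian local ring with maximal ideal m. If the ideal ⋂ Ann_R Ext_R^i(M,N), where the intersection ranges over all integers i > 0 and all modules M, N in CM_0(R), is m-primary (i.e., its radical equals m), then R is an isolated singularity, that is, R_p is a regular local ring for every nonmaximal prime ideal p of R. -/

import Mathlib

open CategoryTheory IsLocalRing

noncomputable section

/-- The `i`-th Tor module of two `R`-modules, as an object of `ModuleCat R`. -/
def TorMod (R : Type) [CommRing R] (i : ℕ) (M N : ModuleCat.{0} R) : ModuleCat.{0} R :=
  ((Tor (ModuleCat.{0} R) i).obj M).obj N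

/-- The `i`-th Ext module of two `R`-modules, as an object of `ModuleCat R`. -/
def ExtMod (R : Type) [CommRing R] (i : ℕ) (M N : ModuleCat.{0} R) : ModuleCat.{0} R :=
  ((Ext R (ModuleCat.{0} R) i).obj (Opposite.op M)).obj N

/-- Integer-indexed Tor: `Tor_n = 0` for `n < 0`. -/
def TorZ (R : Type) [CommRing R] (n : ℤ) (M N : ModuleCat.{0} R) : ModuleCat.{0} R :=
  if 0 ≤ n then TorMod R n.toNat M N else ModuleCat.of R PUnit

/-- Integer-indexed Ext: `Ext^n = 0` for `n < 0`. -/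
def ExtZ (R : Type) [CommRing R] (n : ℤ) (M N : ModuleCat.{0} R) : ModuleCat.{0} R :=
  if 0 ≤ n then ExtMod R n.toNat M N else ModuleCat.of R PUnit

/-- The depth of a module `N` over a local ring `S`, defined as the infimum of the set of
integers `i` such that `Ext^i(k, N) ≠ 0`, where `k` is the residue field of `S`
(`⊤` if no such `i` exists). -/
def moduleDepth (S : Type) [CommRing S] [IsLocalRing S] (N : Type) [AddCommGroup N]
    [Module S N] : ℕ∞ :=
  sInf {i : ℕ∞ | ∃ j : ℕ, i = (j : ℕ∞) ∧
    Nontrivial (ExtMod S j (ModuleCat.of S (ResidueField S)) (ModuleCat.of S N))}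

/-- A local ring is regular if it is noetherian and its maximal ideal can be generated by
(Krull dimension of `S`)-many elements. -/
def IsRegularLocal (S : Type) [CommRing S] [IsLocalRing S] : Prop :=
  IsNoetherianRing S ∧ ∃ s : Finset S, Ideal.span (s : Set S) = maximalIdeal S ∧
    (s.card : WithBot ℕ∞) = ringKrullDim S

/-- A local ring is Cohen-Macaulay if its depth (as a module over itself) equals its
Krull dimension. -/
def IsCMLocalRing (R : Type) [CommRing R] [IsLocalRing R] : Prop :=
  (moduleDepth R R : WithBot ℕ∞) = ringKrullDim R

/-- A module `M` over a local ring `R` is maximal Cohen-Macaulay if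
`depth M_p ≥ dim R_p` for every prime ideal `p` of `R`. -/
def IsMCMModule (R : Type) [CommRing R] [IsLocalRing R] (M : Type) [AddCommGroup M]
    [Module R M] : Prop :=
  ∀ (p : Ideal R) [p.IsPrime],
    ringKrullDim (Localization.AtPrime p) ≤
      (moduleDepth (Localization.AtPrime p) (LocalizedModule p.primeCompl M) : WithBot ℕ∞)

/-- Membership in `CM(R)`: finitely generated maximal Cohen-Macaulay modules. -/
def MemCM (R : Type) [CommRing R] [IsLocalRing R] (M : ModuleCat.{0} R) : Prop :=
  Module.Finite R M ∧ IsMCMModule R M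

/-- Membership in `CM₀(R)`: finitely generated maximal Cohen-Macaulay modules that are
locally free on the punctured spectrum. -/
def MemCM0 (R : Type) [CommRing R] [IsLocalRing R] (M : ModuleCat.{0} R) : Prop :=
  Module.Finite R M ∧ IsMCMModule R M ∧
    ∀ (p : Ideal R) [p.IsPrime], p ≠ maximalIdeal R →
      Module.Free (Localization.AtPrime p) (LocalizedModule p.primeCompl M)

/-- The singular locus of `R`: primes `p` such that `R_p` is not regular. -/
def singularLocus (R : Type) [CommRing R] : Set (PrimeSpectrum R) :=
  {p | ¬ IsRegularLocal (Localization.AtPrime p.asIdeal)}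

/-- The nonfree locus of a module `M`: primes `p` such that `M_p` is not a free
`R_p`-module. -/
def nonfreeLocus (R : Type) [CommRing R] (M : Type) [AddCommGroup M] [Module R M] :
    Set (PrimeSpectrum R) :=
  {p | ¬ Module.Free (Localization.AtPrime p.asIdeal)
        (LocalizedModule p.asIdeal.primeCompl M)}

/-- `K` is a first syzygy of `N` in a minimal free resolution: there is a surjection
`f : R^n → N` with `ker f ⊆ m·R^n` and `K ≅ ker f`. -/
def IsMinimalSyzygy1 (R : Type) [CommRing R] [IsLocalRing R] (N K : ModuleCat.{0} R) : Prop :=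
  ∃ (n : ℕ) (f : (Fin n → R) →ₗ[R] N), Function.Surjective f ∧
    LinearMap.ker f ≤ (maximalIdeal R) • (⊤ : Submodule R (Fin n → R)) ∧
    Nonempty (K ≃ₗ[R] LinearMap.ker f)

/-- `K` is a `d`-th syzygy of `N` in a minimal free resolution. -/
def IsMinimalSyzygy (R : Type) [CommRing R] [IsLocalRing R] :
    ℕ → ModuleCat.{0} R → ModuleCat.{0} R → Prop
  | 0, N, K => Nonempty ((K : Type) ≃ₗ[R] N)
  | d + 1, N, K => ∃ L : ModuleCat.{0} R, IsMinimalSyzygy1 R N L ∧ IsMinimalSyzygy R d L K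

/-- A module is indecomposable if it is nonzero and is not isomorphic to the direct sum of
two nonzero modules. -/
def IndecomposableModule (R : Type) [CommRing R] (M : Type) [AddCommGroup M] [Module R M] :
    Prop :=
  Nontrivial M ∧ ∀ (A B : Type) [AddCommGroup A] [Module R A] [AddCommGroup B] [Module R B],
    Nonempty (M ≃ₗ[R] A × B) → (Subsingleton A ∨ Subsingleton B)


section bridge
universe u
variable {R : Type} [CommRing R]

lemma smul_homology_zero_iff (K : CochainComplex (ModuleCat.{0} R) ℕ) (r : R) (i j k : ℕ)
    (hi : (ComplexShape.up ℕ).prev j = i) (hk : (ComplexShape.up ℕ).next j = k) :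
    r ∈ Module.annihilator R (K.homology j) ↔
      ∀ x : K.X j, K.d j k x = 0 → ∃ y : K.X i, K.d i j y = r • x := by
  subst hi hk
  rw [Module.mem_annihilator]
  let S := K.sc j
  have e : K.homology j ≅ S.moduleCatLeftHomologyData.H := S.moduleCatHomologyIso
  have hx : (∀ m : K.homology j, r • m = 0) ↔ ∀ m : S.moduleCatLeftHomologyData.H, r • m = 0 := by
    constructor
    · intro h m
      have := h (e.toLinearEquiv.symm m)
      rw [← LinearEquiv.map_smul] at this
      exact (LinearEquiv.map_eq_zero_iff _).mp this
    · intro h m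
      have := h (e.toLinearEquiv m)
      rw [← LinearEquiv.map_smul] at this
      exact (LinearEquiv.map_eq_zero_iff _).mp this
  rw [hx]
  constructor
  · intro h x hx
    have h1 : Submodule.Quotient.mk (p := LinearMap.range S.moduleCatToCycles) (r • ⟨x, hx⟩) = 0 :=
      h (Submodule.Quotient.mk (p := LinearMap.range S.moduleCatToCycles) ⟨x, hx⟩)
    rw [Submodule.Quotient.mk_eq_zero] at h1
    obtain ⟨y, hy⟩ := h1
    exact ⟨y, congrArg Subtype.val hy⟩
  · intro h m
    obtain ⟨⟨x, hx⟩, rfl⟩ := Submodule.Quotient.mk_surjective _ m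
    obtain ⟨y, hy⟩ := h x hx
    change r • (Submodule.Quotient.mk (p := LinearMap.range S.moduleCatToCycles) ⟨x, hx⟩) = 0
    rw [← Submodule.Quotient.mk_smul, Submodule.Quotient.mk_eq_zero]
    exact ⟨y, Subtype.ext hy⟩

lemma mem_ann_extMod_iff (M N : ModuleCat.{0} R) (P : ProjectiveResolution M) (r : R) (n : ℕ) :
    r ∈ Module.annihilator R (ExtMod R (n+1) M N) ↔
      ∀ f : P.complex.X (n+1) ⟶ N, P.complex.d (n+2) (n+1) ≫ f = 0 →
        ∃ g : P.complex.X n ⟶ N, P.complex.d (n+1) n ≫ g = r • f := by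
  have e := (P.isoExt (R := R) (n+1) N).toLinearEquiv
  have h0 : r ∈ Module.annihilator R (ExtMod R (n+1) M N) ↔
      r ∈ Module.annihilator R ((P.complex.linearYonedaObj R N).homology (n+1)) := by
    rw [← LinearEquiv.annihilator_eq e]; rfl
  rw [h0, smul_homology_zero_iff _ r n (n+1) (n+2) (by simp) (by simp)]
  exact Iff.rfl

lemma subsingleton_extMod_zero_iff (M N : ModuleCat.{0} R) :
    Subsingleton (ExtMod R 0 M N) ↔ Subsingleton (M ⟶ N) := by
  have P : ProjectiveResolution M := (HasProjectiveResolution.out (Z := M)).some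
  have e := (P.isoExt (R := R) 0 N).toLinearEquiv
  have h0 : Subsingleton (ExtMod R 0 M N) ↔
      1 ∈ Module.annihilator R ((P.complex.linearYonedaObj R N).homology 0) := by
    rw [← LinearEquiv.annihilator_eq e, Module.mem_annihilator]
    simp only [one_smul]
    exact ⟨fun h m => h.elim _ _, fun h => ⟨fun a b => (h a).trans (h b).symm⟩⟩
  rw [h0, smul_homology_zero_iff _ 1 0 0 1 (by simp) (by simp)]
  have : (∀ x : (P.complex.X 0 ⟶ N), P.complex.d 1 0 ≫ x = 0 → x = 0) ↔ Subsingleton (M ⟶ N) := by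
    constructor
    · intro h
      refine subsingleton_of_forall_eq 0 fun f => ?_
      let f' : ((ChainComplex.single₀ (ModuleCat R)).obj M).X 0 ⟶ N := f
      have h1 := h (P.π.f 0 ≫ f') (by
        rw [← Category.assoc, P.complex_d_comp_π_f_zero, Limits.zero_comp])
      have : Epi (P.π.f 0) := inferInstance
      have h2 : f' = 0 := by rw [← cancel_epi (P.π.f 0), h1, Limits.comp_zero]
      exact h2
    · intro h x hx
      have : Epi (P.π.f 0) := inferInstance
      have hx2 := P.exact₀.desc' x hx
      obtain ⟨l, hl⟩ := hx2
      rw [← hl]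
      have : l = 0 := h.elim _ _
      rw [this, Limits.comp_zero]
  rw [← this]
  constructor
  · intro h x hx
    obtain ⟨y, hy⟩ := h x hx
    replace hy := hy.trans (one_smul R (show (P.complex.linearYonedaObj R N).X 0 from x))
    refine hy.symm.trans ?_
    have : (P.complex.linearYonedaObj R N).d 0 0 = 0 :=
      (P.complex.linearYonedaObj R N).shape _ _ (by simp)
    rw [this]; rfl
  · intro h x hx
    refine ⟨0, ?_⟩
    rw [map_zero, one_smul]
    exact (h x hx).symm

lemma mem_ann_extMod_iff' (M N : ModuleCat.{0} R) (r : R) (n : ℕ) :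
    r ∈ Module.annihilator R (ExtMod R (n+1) M N) ↔ 
      ∀ e : Abelian.Ext M N (n+1), r • e = 0 := by
  have P : ProjectiveResolution M := (HasProjectiveResolution.out (Z := M)).some
  rw [mem_ann_extMod_iff M N P]
  have hs (f : P.complex.X (n+1) ⟶ N) (hf : P.complex.d (n+2) (n+1) ≫ f = 0)
      (hf' : P.complex.d (n+2) (n+1) ≫ (r • f) = 0) :
      r • P.extMk f (n+2) rfl hf = P.extMk (r • f) (n+2) rfl hf' := by
    have := P.extMk_comp_mk₀ f (n+2) rfl hf (r • 𝟙 N)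
    rw [Abelian.Ext.smul_eq_comp_mk₀, this]
    simp
  constructor
  · intro h e
    obtain ⟨f, hf, rfl⟩ := P.extMk_surjective e (n+2) rfl
    have hf' : P.complex.d (n+2) (n+1) ≫ (r • f) = 0 := by
      rw [Linear.comp_smul, hf, smul_zero]
    rw [hs f hf hf', P.extMk_eq_zero_iff (r • f) (n+2) rfl hf' n rfl]
    exact h f hf
  · intro h f hf
    have hf' : P.complex.d (n+2) (n+1) ≫ (r • f) = 0 := by
      rw [Linear.comp_smul, hf, smul_zero]
    rw [← P.extMk_eq_zero_iff (r • f) (n+2) rfl hf' n rfl, ← hs f hf hf']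
    exact h _

lemma subsingleton_extMod_iff (M N : ModuleCat.{0} R) (n : ℕ) :
    Subsingleton (ExtMod R n M N) ↔ Subsingleton (Abelian.Ext M N n) := by
  cases n with
  | zero =>
    rw [subsingleton_extMod_zero_iff]
    exact (Abelian.Ext.homEquiv₀ (X := M) (Y := N)).subsingleton_congr.symm
  | succ n =>
    have h1 : Subsingleton (ExtMod R (n+1) M N) ↔
        1 ∈ Module.annihilator R (ExtMod R (n+1) M N) := by
      rw [Module.mem_annihilator]
      simp only [one_smul]
      exact ⟨fun h m => h.elim _ _, fun h => ⟨fun a b => (h a).trans (h b).symm⟩⟩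
    rw [h1, mem_ann_extMod_iff']
    simp only [one_smul]
    exact ⟨fun h => ⟨fun a b => (h a).trans (h b).symm⟩, fun h m => h.elim _ _⟩

lemma le_moduleDepth_iff {S : Type} [CommRing S] [IsLocalRing S] {N : Type} [AddCommGroup N]
    [Module S N] (n : ℕ∞) : n ≤ moduleDepth S N ↔
      ∀ i : ℕ, (i : ℕ∞) < n → 
        Subsingleton (Abelian.Ext (ModuleCat.of S (ResidueField S)) (ModuleCat.of S N) i) := by
  unfold moduleDepth
  rw [le_sInf_iff]
  constructor
  · intro h i hi
    rw [← subsingleton_extMod_iff]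
    by_contra hc
    exact absurd (h i ⟨i, rfl, not_subsingleton_iff_nontrivial.mp hc⟩) (not_le.mpr hi)
  · rintro h _ ⟨j, rfl, hj⟩
    by_contra hc
    have := (subsingleton_extMod_iff _ _ _).mpr (h j (not_le.mp hc))
    exact not_subsingleton_iff_nontrivial.mpr hj this

end bridge


section cmloc
open scoped Pointwise
variable {R : Type} [CommRing R]

lemma ext_subsingleton_of_iso {A B M : ModuleCat.{0} R} (e : A ≅ B) (i : ℕ)
    (h : Subsingleton (Abelian.Ext A M i)) : Subsingleton (Abelian.Ext B M i) := by
  refine subsingleton_of_forall_eq 0 fun x => ?_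
  have h1 : (Abelian.Ext.mk₀ e.hom).comp x (zero_add i) = 0 := h.elim _ _
  have h2 : (Abelian.Ext.mk₀ e.inv).comp ((Abelian.Ext.mk₀ e.hom).comp x (zero_add i))
      (zero_add i) = x := by
    rw [Abelian.Ext.mk₀_comp_mk₀_assoc]; simp
  rw [← h2, h1, Abelian.Ext.comp_zero]

lemma ext_subsingleton_of_iso_right {A M N : ModuleCat.{0} R} (e : M ≅ N) (i : ℕ)
    (h : Subsingleton (Abelian.Ext A M i)) : Subsingleton (Abelian.Ext A N i) := by
  refine subsingleton_of_forall_eq 0 fun x => ?_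
  have h1 : x.comp (Abelian.Ext.mk₀ e.inv) (add_zero i) = 0 := h.elim _ _
  have h2 : (x.comp (Abelian.Ext.mk₀ e.inv) (add_zero i)).comp (Abelian.Ext.mk₀ e.hom)
      (add_zero i) = x := by
    rw [Abelian.Ext.comp_assoc_of_third_deg_zero, Abelian.Ext.mk₀_comp_mk₀]; simp
  rw [← h2, h1, Abelian.Ext.zero_comp]

lemma ischebeck [IsNoetherianRing R] [IsLocalRing R] (M : ModuleCat.{0} R) [Module.Finite R M]
    (d : ℕ) (h : ∀ i < d, Subsingleton (Abelian.Ext (ModuleCat.of R (ResidueField R)) M i))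
    (c : PrimeSpectrum R → ℕ) (hc : StrictAnti c) (n : ℕ) :
    ∀ p : PrimeSpectrum R, c p = n → ∀ i : ℕ, i + n < d →
      Subsingleton (Abelian.Ext (ModuleCat.of R (R ⧸ p.asIdeal)) M i) := by
  induction n using Nat.strong_induction_on with
  | _ n ih =>
  intro p hp i hi
  by_cases hpm : p.asIdeal = maximalIdeal R
  · have e : (ModuleCat.of R (ResidueField R)) ≅ (ModuleCat.of R (R ⧸ p.asIdeal)) :=
      (Submodule.quotEquivOfEq _ _ hpm.symm).toModuleIso
    exact ext_subsingleton_of_iso e i (h i (by omega))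
  obtain ⟨x, hxm, hxp⟩ : ∃ x ∈ maximalIdeal R, x ∉ p.asIdeal := by
    by_contra! hcon
    exact hpm (le_antisymm (le_maximalIdeal p.2.ne_top) hcon)
  -- filtration
  have key : ∀ (N : Type) [AddCommGroup N] [Module R N] [Module.Finite R N],
      p.asIdeal ⊔ Ideal.span {x} ≤ Module.annihilator R N → ∀ j, j + n ≤ d →
        Subsingleton (Abelian.Ext (ModuleCat.of R N) M j) := by
    intro N _ _ hN
    induction hN using IsNoetherianRing.induction_on_isQuotientEquivQuotientPrime R with
    | subsingleton N =>
      intro _ j _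
      refine subsingleton_of_forall_eq 0 fun e => ?_
      have : 𝟙 (ModuleCat.of R N) = 0 := by ext a; exact Subsingleton.elim _ _
      rw [← Abelian.Ext.mk₀_id_comp e, this, Abelian.Ext.mk₀_zero, Abelian.Ext.zero_comp]
    | quotient N q f =>
      intro hann j hj
      rw [f.annihilator_eq, Ideal.annihilator_quotient] at hann
      have hlt : p < q := by
        refine lt_of_le_of_ne (le_sup_left.trans hann) ?_
        rintro rfl
        exact hxp (hann (Ideal.mem_sup_right (Ideal.mem_span_singleton_self x)))
      have := hc hlt
      exact ext_subsingleton_of_iso f.symm.toModuleIso j (ih (c q) (by omega) q rfl j (by omega))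
    | exact N₁ N₂ N₃ f g hf hg hfg h₁ h₃ =>
      intro hann j hj
      have a1 := h₁ (hann.trans (LinearMap.annihilator_le_of_injective f hf)) j hj
      have a3 := h₃ (hann.trans (LinearMap.annihilator_le_of_surjective g hg)) j hj
      let S : ShortComplex (ModuleCat.{0} R) :=
        ShortComplex.mk (ModuleCat.ofHom f) (ModuleCat.ofHom g) (by
          ext a; exact hfg.apply_apply_eq_zero a)
      have hS : S.ShortExact :=
        { exact := (ShortComplex.ShortExact.moduleCat_exact_iff_function_exact S).mpr hfg
          mono_f := (ModuleCat.mono_iff_injective _).mpr hf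
          epi_g := (ModuleCat.epi_iff_surjective _).mpr hg }
      refine subsingleton_of_forall_eq 0 fun e => ?_
      obtain ⟨e3, he3⟩ := Abelian.Ext.contravariant_sequence_exact₂ hS M e (a1.elim _ _)
      rw [← he3, show e3 = 0 from a3.elim _ _, Abelian.Ext.comp_zero]
  let A := ModuleCat.of R (R ⧸ p.asIdeal)
  have reg : IsSMulRegular A x := by
    rw [isSMulRegular_iff_right_eq_zero_of_smul]
    intro a ha
    obtain ⟨b, rfl⟩ := Ideal.Quotient.mk_surjective a
    change Ideal.Quotient.mk p.asIdeal (x * b) = 0 at ha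
    rw [Ideal.Quotient.eq_zero_iff_mem] at ha ⊢
    exact (p.2.mem_or_mem ha).resolve_left hxp
  have hS := reg.smulShortComplex_shortExact
  have hfin : Module.Finite R A := inferInstanceAs (Module.Finite R (R ⧸ p.asIdeal))
  have h3 : Subsingleton (Abelian.Ext (ModuleCat.smulShortComplex A x).X₃ M (i+1)) := by
    refine key (QuotSMulTop x A) ?_ (i+1) (by omega)
    rw [sup_le_iff]
    constructor
    · have := LinearMap.annihilator_le_of_surjective
        (Submodule.mkQ (x • (⊤ : Submodule R A))) (Submodule.mkQ_surjective _)
      refine le_trans ?_ this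
      exact (Ideal.annihilator_quotient (I := p.asIdeal)).ge
    · rw [Ideal.span_singleton_le_iff_mem, Module.mem_annihilator]
      intro m
      obtain ⟨a, rfl⟩ := Submodule.Quotient.mk_surjective _ m
      rw [← Submodule.Quotient.mk_smul, Submodule.Quotient.mk_eq_zero]
      exact Submodule.smul_mem_pointwise_smul _ _ _ trivial
  have hsurj : ∀ e : Abelian.Ext A M i, ∃ e' : Abelian.Ext A M i, x • e' = e := by
    intro e
    obtain ⟨e', he'⟩ := Abelian.Ext.contravariant_sequence_exact₁ hS M e (add_comm 1 i)
      (h3.elim _ _)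
    have h : ∀ e'' : Abelian.Ext A M i,
        (Abelian.Ext.mk₀ (x • 𝟙 A)).comp e'' (zero_add i) = x • e'' := by
      intro e''
      rw [Abelian.Ext.mk₀_smul, Abelian.Ext.smul_comp, Abelian.Ext.mk₀_id_comp]
    refine ⟨e', (h e').symm.trans ?_⟩
    rw [← he', ModuleCat.smulShortComplex_f_eq_smul_id]
    rfl
  have htop : (⊤ : Submodule R (Abelian.Ext A M i)) ≤ maximalIdeal R • ⊤ := by
    intro e _
    obtain ⟨e', rfl⟩ := hsurj e
    exact Submodule.smul_mem_smul hxm trivial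
  have := Submodule.eq_bot_of_le_smul_of_le_jacobson_bot (maximalIdeal R) ⊤
    Module.Finite.fg_top htop (IsLocalRing.maximalIdeal_le_jacobson _)
  exact (Submodule.subsingleton_iff R).mp (subsingleton_of_bot_eq_top this.symm)

/-- localization of CM is CM -/
lemma cm_localize [IsNoetherianRing R] [IsLocalRing R] (hCM : IsCMLocalRing R)
    (q : Ideal R) [q.IsPrime] : ∀ i : ℕ, (i : WithBot ℕ∞) < ringKrullDim (Localization.AtPrime q) →
      Subsingleton (Abelian.Ext (ModuleCat.of (Localization.AtPrime q)
        (ResidueField (Localization.AtPrime q)))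
        (ModuleCat.of (Localization.AtPrime q) (Localization.AtPrime q)) i) := by
  obtain ⟨d, hd⟩ : ∃ d : ℕ, ringKrullDim R = d := by
    obtain ⟨d, hd⟩ := WithBot.ne_bot_iff_exists.mp (ringKrullDim_ne_bot (R := R))
    have hfin : ringKrullDim R ≠ ⊤ := ringKrullDim_lt_top.ne
    have hdt : d ≠ ⊤ := by rintro rfl; exact hfin hd.symm
    obtain ⟨n, rfl⟩ := ENat.ne_top_iff_exists.mp hdt
    exact ⟨n, hd.symm⟩
  have hExt : ∀ i < d, Subsingleton (Abelian.Ext (ModuleCat.of R (ResidueField R))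
      (ModuleCat.of R R) i) := by
    intro i hi
    refine (le_moduleDepth_iff (S := R) (N := R) (d : ℕ∞)).mp ?_ i (by exact_mod_cast hi)
    have : (moduleDepth R R : WithBot ℕ∞) = ((d : ℕ∞) : WithBot ℕ∞) := by
      have h0 : (moduleDepth R R : WithBot ℕ∞) = ringKrullDim R := hCM
      rw [h0, hd]; rfl
    rw [WithBot.coe_inj] at this
    exact this.ge
  let c : PrimeSpectrum R → ℕ := fun p => (Order.coheight p).toNat
  have hcfin : ∀ p : PrimeSpectrum R, Order.coheight p ≠ ⊤ := by
    intro p hp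
    have := Order.coheight_le_krullDim p
    rw [hp] at this
    have h2 : ((⊤ : ℕ∞) : WithBot ℕ∞) ≤ ((d : ℕ∞) : WithBot ℕ∞) := by
      refine this.trans ?_
      exact hd.le
    rw [WithBot.coe_le_coe] at h2
    simp at h2
  have hcc : ∀ p, (c p : ℕ∞) = Order.coheight p := fun p => ENat.natCast_toNat (hcfin p)
  have hc : StrictAnti c := by
    intro p p' h
    have := Order.coheight_add_one_le h
    rw [← hcc, ← hcc] at this
    have : c p' + 1 ≤ c p := by exact_mod_cast this
    omega
  let Q : PrimeSpectrum R := ⟨q, inferInstance⟩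
  have hsum : q.height + Order.coheight Q ≤ d := by
    have h1 : ((Order.height Q + Order.coheight Q : ℕ∞) : WithBot ℕ∞) ≤ ringKrullDim R := by
      rw [ringKrullDim, Order.krullDim_eq_iSup_height_add_coheight_of_nonempty]
      rw [WithBot.coe_le_coe]
      exact le_iSup (fun a : PrimeSpectrum R => Order.height a + Order.coheight a) Q
    rw [hd] at h1
    have h2 : Order.height Q + Order.coheight Q ≤ d := WithBot.coe_le_coe.mp h1
    rwa [← PrimeSpectrum.height_eq_orderHeight] at h2
  rw [IsLocalization.AtPrime.ringKrullDim_eq_height q]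
  intro i hi
  have hi : (i : ℕ∞) < q.height := WithBot.coe_lt_coe.mp hi
  obtain ⟨n, hn⟩ : ∃ n : ℕ, q.height = n := by
    refine (ENat.ne_top_iff_exists.mp ?_).imp fun _ h => h.symm
    intro hh
    rw [hh] at hsum
    simp at hsum
  rw [hn] at hi hsum
  have hin : i < n := by exact_mod_cast hi
  have hnc : n + c Q ≤ d := by rw [← hcc] at hsum; exact_mod_cast hsum
  have hE := ischebeck (ModuleCat.of R R) d hExt c hc (c Q) Q rfl
  have hlt : q • (⊤ : Submodule R (ModuleCat.of R R)) < ⊤ := by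
    change q • (⊤ : Ideal R) < ⊤
    rw [smul_eq_mul, Ideal.mul_top]
    exact lt_top_iff_ne_top.mpr (Ideal.IsPrime.ne_top inferInstance)
  have hsupp : Module.support R (ModuleCat.of R (R ⧸ q)) = PrimeSpectrum.zeroLocus q := by
    rw [Module.support_eq_zeroLocus]
    exact congrArg _ (congrArg _ Ideal.annihilator_quotient)
  have hqf : Module.Finite R (ModuleCat.of R (R ⧸ q)) := inferInstanceAs (Module.Finite R (R ⧸ q))
  have hrf : Module.Finite R (ModuleCat.of R R) := inferInstanceAs (Module.Finite R R)
  obtain ⟨rs, hlen, hmem, hreg⟩ := ModuleCat.exists_isRegular_of_exists_subsingleton_ext q n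
    (ModuleCat.of R R) hlt (ModuleCat.of R (R ⧸ q)) hsupp (fun i hi => hE i (by omega))
  let S := Localization.AtPrime q
  have hreg' := RingTheory.Sequence.IsWeaklyRegular.isRegular_of_isLocalization_of_mem S q
    (rs := rs) hreg.1 hmem
  have hmem' : ∀ r ∈ rs.map (algebraMap R S), r ∈ maximalIdeal S := by
    intro r hr
    obtain ⟨r', hr', rfl⟩ := List.mem_map.mp hr
    exact (IsLocalization.AtPrime.to_map_mem_maximal_iff S q r').mpr (hmem r' hr')
  have hkf : Module.Finite S (ModuleCat.of S (ResidueField S)) :=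
    inferInstanceAs (Module.Finite S (S ⧸ maximalIdeal S))
  have hsf : Module.Finite S (ModuleCat.of S S) := inferInstanceAs (Module.Finite S S)
  have hN : IsNoetherianRing S := IsLocalization.isNoetherianRing q.primeCompl S inferInstance
  refine ModuleCat.subsingleton_ext_of_exists_isRegular (maximalIdeal S)
    (ModuleCat.of S (ResidueField S)) ?_ (ModuleCat.of S S) ?_ (rs.map (algebraMap R S))
    hmem' hreg' i (by simpa [hlen] using hin)
  · rw [Module.support_eq_zeroLocus]
    exact (congrArg _ (congrArg _ (Ideal.annihilator_quotient (I := maximalIdeal S)))).le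
  · change maximalIdeal S • (⊤ : Ideal S) < ⊤
    rw [smul_eq_mul, Ideal.mul_top]
    exact lt_top_iff_ne_top.mpr (Ideal.IsPrime.ne_top inferInstance)

end cmloc


section syz

/-- `K` is a first syzygy of `N`. -/
def IsSyz (R : Type) [CommRing R] (N K : ModuleCat.{0} R) : Prop :=
  ∃ (F : ModuleCat.{0} R) (i : K →ₗ[R] F) (f : F →ₗ[R] N), Module.Free R F ∧ Module.Finite R F ∧
    Function.Injective i ∧ Function.Exact i f ∧ Function.Surjective f

/-- `K` is an `n`-th syzygy of `N`. -/
def IsSyzN (R : Type) [CommRing R] : ℕ → ModuleCat.{0} R → ModuleCat.{0} R → Prop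
  | 0, N, K => N = K
  | n + 1, N, K => ∃ L : ModuleCat.{0} R, IsSyzN R n N L ∧ IsSyz R L K

variable {R : Type} [CommRing R]

lemma IsSyz.finite [IsNoetherianRing R] {N K : ModuleCat.{0} R} (h : IsSyz R N K) :
    Module.Finite R K := by
  obtain ⟨F, i, f, _, _, hi, _, _⟩ := h
  exact Module.Finite.of_injective i hi

lemma exists_isSyz [IsNoetherianRing R] (N : ModuleCat.{0} R) [Module.Finite R N] :
    ∃ K, IsSyz R N K := by
  obtain ⟨n, f, hf⟩ := Module.Finite.exists_fin' R N
  refine ⟨ModuleCat.of R (LinearMap.ker f), ModuleCat.of R (Fin n → R),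
    (LinearMap.ker f).subtype, f, inferInstanceAs (Module.Free R (Fin n → R)),
    inferInstanceAs (Module.Finite R (Fin n → R)), Subtype.val_injective, ?_, hf⟩
  exact LinearMap.exact_subtype_ker_map f

lemma IsSyzN.finite [IsNoetherianRing R] {n : ℕ} {N K : ModuleCat.{0} R} (h : IsSyzN R n N K)
    [hN : Module.Finite R N] : Module.Finite R K := by
  cases n with
  | zero => cases h; exact hN
  | succ n => obtain ⟨L, _, h⟩ := h; exact h.finite

lemma exists_isSyzN [IsNoetherianRing R] (n : ℕ) (N : ModuleCat.{0} R) [Module.Finite R N] :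
    ∃ K, IsSyzN R n N K := by
  induction n with
  | zero => exact ⟨N, rfl⟩
  | succ n ih =>
    obtain ⟨L, hL⟩ := ih
    have := hL.finite
    obtain ⟨K, hK⟩ := exists_isSyz L
    exact ⟨K, L, hL, hK⟩

/-- localization of a module category object -/
def locM (q : Ideal R) [q.IsPrime] (M : ModuleCat.{0} R) :
    ModuleCat.{0} (Localization.AtPrime q) :=
  ModuleCat.of (Localization.AtPrime q) (LocalizedModule q.primeCompl M)

lemma free_of_proj_loc [IsLocalRing R] (K : ModuleCat.{0} R) [Module.Finite R K]
    [Module.Projective R K] : Module.Free R K :=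
  Module.free_of_flat_of_isLocalRing

lemma free_locMod (S : Submonoid R) (F : Type) [AddCommGroup F] [Module R F] [Module.Free R F] :
    Module.Free (Localization S) (LocalizedModule S F) :=
  Module.free_of_isLocalizedModule S (LocalizedModule.mkLinearMap S F)

lemma IsSyz.loc (q : Ideal R) [q.IsPrime] {N K : ModuleCat.{0} R} (h : IsSyz R N K) :
    IsSyz (Localization.AtPrime q) (locM q N) (locM q K) := by
  obtain ⟨F, i, f, hF, hFf, hi, hif, hf⟩ := h
  refine ⟨locM q F, LocalizedModule.map q.primeCompl i, LocalizedModule.map q.primeCompl f,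
    ?_, ?_, ?_, ?_, ?_⟩
  · exact free_locMod q.primeCompl F
  · exact inferInstanceAs (Module.Finite _ (LocalizedModule q.primeCompl F))
  · exact LocalizedModule.map_injective _ _ hi
  · exact LocalizedModule.map_exact _ _ _ hif
  · exact LocalizedModule.map_surjective _ _ hf

lemma IsSyzN.loc (q : Ideal R) [q.IsPrime] {n : ℕ} {N K : ModuleCat.{0} R} (h : IsSyzN R n N K) :
    IsSyzN (Localization.AtPrime q) n (locM q N) (locM q K) := by
  induction n generalizing K with
  | zero => cases h; rfl
  | succ n ih =>
    obtain ⟨L, hL, h⟩ := h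
    exact ⟨locM q L, ih hL, h.loc q⟩

lemma IsSyz.projective {N K : ModuleCat.{0} R} (h : IsSyz R N K) [Module.Projective R N] :
    Module.Projective R K := by
  obtain ⟨F, i, f, hF, hFf, hi, hif, hf⟩ := h
  have h1 := Module.projective_lifting_property f LinearMap.id hf
  obtain ⟨l, hl⟩ := ((hif.split_tfae hi hf).out 0 1).mp h1
  exact Module.Projective.of_split i l hl

lemma IsSyzN.projective {n : ℕ} {N K : ModuleCat.{0} R} (h : IsSyzN R n N K)
    [hN : Module.Projective R N] : Module.Projective R K := by
  induction n generalizing K with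
  | zero => cases h; exact hN
  | succ n ih =>
    obtain ⟨L, hL, h⟩ := h
    have := ih hL
    exact h.projective

lemma ext_free_subsingleton (X F : ModuleCat.{0} R) [Module.Free R F] [Module.Finite R F] (i : ℕ)
    (h : Subsingleton (Abelian.Ext X (ModuleCat.of R R) i)) :
    Subsingleton (Abelian.Ext X F i) := by
  refine subsingleton_of_forall_eq 0 fun e => ?_
  let b := Module.Free.chooseBasis R F
  have hid : 𝟙 F = ∑ j, (ModuleCat.ofHom (b.coord j) ≫
      (ModuleCat.ofHom (LinearMap.toSpanSingleton R F (b j)) : ModuleCat.of R R ⟶ F)) := by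
    ext x
    rw [ModuleCat.hom_sum, LinearMap.sum_apply]
    simp
  rw [← Abelian.Ext.comp_mk₀_id e, hid, Abelian.Ext.mk₀_sum, Abelian.Ext.comp_sum]
  refine Finset.sum_eq_zero fun j _ => ?_
  rw [← Abelian.Ext.mk₀_comp_mk₀, ← Abelian.Ext.comp_assoc_of_third_deg_zero,
    show e.comp (Abelian.Ext.mk₀ (ModuleCat.ofHom (b.coord j))) (add_zero i) = 0 from h.elim _ _,
    Abelian.Ext.zero_comp]

/-- The short complex attached to an exact sequence. -/
def scOf {K F N : ModuleCat.{0} R} (i : K →ₗ[R] F) (f : F →ₗ[R] N) (h : Function.Exact i f) :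
    ShortComplex (ModuleCat.{0} R) :=
  ShortComplex.mk (ModuleCat.ofHom i) (ModuleCat.ofHom f) (by
    ext a; exact h.apply_apply_eq_zero a)

lemma scOf_shortExact {K F N : ModuleCat.{0} R} (i : K →ₗ[R] F) (f : F →ₗ[R] N)
    (h : Function.Exact i f) (hi : Function.Injective i) (hf : Function.Surjective f) :
    (scOf i f h).ShortExact :=
  { exact := (ShortComplex.ShortExact.moduleCat_exact_iff_function_exact (scOf i f h)).mpr h
    mono_f := (ModuleCat.mono_iff_injective _).mpr hi
    epi_g := (ModuleCat.epi_iff_surjective _).mpr hf }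

lemma IsSyzN.ext {n : ℕ} {N K : ModuleCat.{0} R} (h : IsSyzN R n N K) (X : ModuleCat.{0} R) (D : ℕ)
    (hD : ∀ i < D, Subsingleton (Abelian.Ext X (ModuleCat.of R R) i)) :
    ∀ i, i < n → i < D → Subsingleton (Abelian.Ext X K i) := by
  induction n generalizing K with
  | zero => intro i hi; omega
  | succ n ih =>
    obtain ⟨L, hL, F, u, f, hF, hFf, hi, hif, hf⟩ := h
    intro j hj hjD
    have hS := scOf_shortExact u f hif hi hf
    have hFE := ext_free_subsingleton X F j (hD j hjD)
    refine subsingleton_of_forall_eq 0 fun e => ?_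
    have h0 : e.comp (Abelian.Ext.mk₀ (scOf u f hif).f) (add_zero j) = 0 := hFE.elim _ _
    cases j with
    | zero =>
      obtain ⟨g, rfl⟩ := (Abelian.Ext.mk₀_bijective X K).2 e
      have hmono := hS.mono_f
      have hm : Mono (ModuleCat.ofHom u) := hmono
      have h1 : g ≫ ModuleCat.ofHom u = 0 :=
        (Abelian.Ext.mk₀_bijective X F).1 (hFE.elim _ _)
      have h2 : g = 0 := by
        rw [← cancel_mono (ModuleCat.ofHom u), h1, Limits.zero_comp]
      rw [h2]; exact Abelian.Ext.mk₀_zero _ _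
    | succ j =>
      obtain ⟨e3, rfl⟩ := Abelian.Ext.covariant_sequence_exact₁ X hS e h0 rfl
      rw [show e3 = 0 from (ih hL j (by omega) (by omega)).elim _ _, Abelian.Ext.zero_comp]
      rfl

lemma exists_krullDim_eq_nat (S : Type) [CommRing S] [IsNoetherianRing S] [IsLocalRing S] :
    ∃ d : ℕ, ringKrullDim S = ((d : ℕ∞) : WithBot ℕ∞) := by
  obtain ⟨d, hd⟩ := WithBot.ne_bot_iff_exists.mp (ringKrullDim_ne_bot (R := S))
  have hfin : ringKrullDim S ≠ ⊤ := ringKrullDim_lt_top.ne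
  have hdt : d ≠ ⊤ := by rintro rfl; exact hfin hd.symm
  obtain ⟨n, rfl⟩ := ENat.ne_top_iff_exists.mp hdt
  exact ⟨n, hd.symm⟩

lemma memCM0_of_isSyzN [IsNoetherianRing R] [IsLocalRing R] (hCM : IsCMLocalRing R) {d : ℕ}
    (hd : ringKrullDim R ≤ ((d : ℕ∞) : WithBot ℕ∞)) (I : Ideal R) (n : ℕ)
    (hI : maximalIdeal R ^ n ≤ I) {j : ℕ} (hj : d ≤ j)
    {K : ModuleCat.{0} R} (hK : IsSyzN R j (ModuleCat.of R (R ⧸ I)) K) : MemCM0 R K := by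
  have hfin0 : Module.Finite R (ModuleCat.of R (R ⧸ I)) :=
    inferInstanceAs (Module.Finite R (R ⧸ I))
  have hfin := hK.finite
  refine ⟨hfin, ?_, ?_⟩
  · intro q _
    have hN : IsNoetherianRing (Localization.AtPrime q) :=
      IsLocalization.isNoetherianRing q.primeCompl _ inferInstance
    obtain ⟨D, hD⟩ := exists_krullDim_eq_nat (Localization.AtPrime q)
    have hDd : D ≤ d := by
      have h1 : ringKrullDim (Localization.AtPrime q) ≤ ringKrullDim R := by
        rw [IsLocalization.AtPrime.ringKrullDim_eq_height q]
        exact Ideal.height_le_ringKrullDim_of_ne_top (Ideal.IsPrime.ne_top inferInstance)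
      have := h1.trans hd
      rw [hD] at this
      exact_mod_cast WithBot.coe_le_coe.mp this
    have hcm := cm_localize hCM q
    rw [hD] at hcm ⊢
    rw [WithBot.coe_le_coe, le_moduleDepth_iff]
    intro i hi
    have hi : i < D := by exact_mod_cast hi
    refine (hK.loc q).ext _ D (fun i hi => hcm i ?_) i (by omega) hi
    exact WithBot.coe_lt_coe.mpr (by exact_mod_cast hi)
  · intro q _ hq
    have hsub : Subsingleton (locM q (ModuleCat.of R (R ⧸ I))) := by
      change Subsingleton (LocalizedModule q.primeCompl (R ⧸ I))
      rw [LocalizedModule.subsingleton_iff]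
      obtain ⟨x, hxm, hxq⟩ : ∃ x ∈ maximalIdeal R, x ∉ q := by
        by_contra! hcon
        exact hq (le_antisymm (le_maximalIdeal (Ideal.IsPrime.ne_top inferInstance)) hcon)
      intro m
      refine ⟨x ^ n, fun h => hxq (Ideal.IsPrime.mem_of_pow_mem inferInstance n h), ?_⟩
      obtain ⟨b, rfl⟩ := Ideal.Quotient.mk_surjective m
      change Ideal.Quotient.mk I (x ^ n * b) = 0
      rw [Ideal.Quotient.eq_zero_iff_mem]
      exact I.mul_mem_right _ (hI (Ideal.pow_mem_pow hxm n))
    have hproj : Module.Projective (Localization.AtPrime q) (locM q (ModuleCat.of R (R ⧸ I))) := inferInstance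
    have h1 := (hK.loc q).projective
    have h3 : Module.Finite (Localization.AtPrime q) (locM q K) :=
      inferInstanceAs (Module.Finite _ (LocalizedModule q.primeCompl K))
    exact free_of_proj_loc (locM q K)

end syz


section tor
open TensorProduct

variable {R : Type} [CommRing R]

lemma tor_chase {L G B K F L' F2 : Type} [AddCommGroup L] [AddCommGroup G] [AddCommGroup B]
    [AddCommGroup K] [AddCommGroup F] [AddCommGroup L'] [AddCommGroup F2]
    [Module R L] [Module R G] [Module R B] [Module R K] [Module R F] [Module R L'] [Module R F2]
    [Module.Flat R G] [Module.Flat R F2] (a : R)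
    (u : L →ₗ[R] G) (g : G →ₗ[R] B) (hu : Function.Injective u) (hug : Function.Exact u g)
    (hg : Function.Surjective g)
    (i : K →ₗ[R] F) (f : F →ₗ[R] L') (hi : Function.Injective i) (hif : Function.Exact i f)
    (hf : Function.Surjective f) (i' : L' →ₗ[R] F2)
    (hk : ∀ z : L ⊗[R] L', i'.lTensor L z = 0 → a • z = 0)
    (z : B ⊗[R] K) (hz : i.lTensor B z = 0) : a • z = 0 := by
  have comm : ∀ {X Y Z W : Type} [AddCommGroup X] [AddCommGroup Y] [AddCommGroup Z]
      [AddCommGroup W] [Module R X] [Module R Y] [Module R Z] [Module R W]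
      (p : X →ₗ[R] Y) (q : Z →ₗ[R] W) (t : X ⊗[R] Z),
      q.lTensor Y (p.rTensor Z t) = p.rTensor W (q.lTensor X t) := by
    intro X Y Z W _ _ _ _ _ _ _ _ p q t
    rw [← LinearMap.comp_apply, ← LinearMap.comp_apply, LinearMap.lTensor_comp_rTensor,
      LinearMap.rTensor_comp_lTensor]
  obtain ⟨z1, rfl⟩ := LinearMap.rTensor_surjective K hg z
  rw [comm] at hz
  obtain ⟨w, hw⟩ := (rTensor_exact F hug hg _).mp hz
  have h1 : i'.lTensor L (f.lTensor L w) = 0 := by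
    apply Module.Flat.rTensor_preserves_injective_linearMap (M := F2) u hu
    rw [map_zero, ← comm, ← comm, hw,
      (lTensor_exact G hif hf).apply_apply_eq_zero, map_zero]
  have h2 := hk _ h1
  rw [← map_smul] at h2
  obtain ⟨v, hv⟩ := (lTensor_exact L hif hf _).mp h2
  have h3 : u.rTensor K v = a • z1 := by
    apply Module.Flat.lTensor_preserves_injective_linearMap (M := G) i hi
    rw [comm, hv, map_smul, map_smul, hw]
  rw [← map_smul, ← h3]
  exact (rTensor_exact K hug hg).apply_apply_eq_zero v

/-- `a` kills all `Tor_{j+1}(B, X)`. -/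
def KillsTor (j : ℕ) (a : R) (B : ModuleCat.{0} R) : Prop :=
  ∀ (X L K F : ModuleCat.{0} R) (i : K →ₗ[R] F) (f : F →ₗ[R] L), IsSyzN R j X L →
    Module.Free R F → Function.Injective i → Function.Exact i f → Function.Surjective f →
    ∀ z : B ⊗[R] K, i.lTensor B z = 0 → a • z = 0

lemma KillsTor.shift {j : ℕ} {a : R} {B L : ModuleCat.{0} R} (h : KillsTor j a L)
    (hs : IsSyz R B L) : KillsTor (j + 1) a B := by
  obtain ⟨G, u, g, hG, _, hu, hug, hg⟩ := hs
  rintro X L' K F i f ⟨L2, hL2, F2, i', f', hF2, _, hi', hif', hf'⟩ hF hi hif hf z hz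
  exact tor_chase a u g hu hug hg i f hi hif hf i' (h X L2 L' F2 i' f' hL2 hF2 hi' hif' hf') z hz

lemma KillsTor.shiftN {n j : ℕ} {a : R} {B L : ModuleCat.{0} R} (h : KillsTor j a L)
    (hs : IsSyzN R n B L) : KillsTor (j + n) a B := by
  induction n generalizing L j with
  | zero => cases hs; exact h
  | succ n ih =>
    obtain ⟨L', h1, h2⟩ := hs
    have := ih (h.shift h2) h1
    rwa [show j + (n + 1) = j + 1 + n by omega]

lemma killsTor_of_factor {a : R} {M G : ModuleCat.{0} R} [Module.Free R G] (s : M →ₗ[R] G)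
    (t : G →ₗ[R] M) (h : t ∘ₗ s = a • LinearMap.id) : KillsTor 0 a M := by
  intro X L K F i f _ _ hi _ _ z hz
  have h1 : s.rTensor K z = 0 := by
    apply Module.Flat.lTensor_preserves_injective_linearMap (M := G) i hi
    rw [map_zero, ← LinearMap.comp_apply, LinearMap.lTensor_comp_rTensor,
      ← LinearMap.rTensor_comp_lTensor, LinearMap.comp_apply, hz, map_zero]
  have h2 : (t ∘ₗ s).rTensor K z = 0 := by
    rw [LinearMap.rTensor_comp, LinearMap.comp_apply, h1, map_zero]
  rw [h, LinearMap.rTensor_smul, LinearMap.rTensor_id] at h2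
  exact h2

/-- If `a` kills `Ext^1(M, K)` with `K` a syzygy of `M` then multiplication by `a` on `M` factors
through a free module -/
lemma killsTor_of_ext {a : R} {M K : ModuleCat.{0} R} (hs : IsSyz R M K)
    (h : ∀ e : Abelian.Ext M K 1, a • e = 0) : KillsTor 0 a M := by
  obtain ⟨F, i, f, hF, _, hi, hif, hf⟩ := hs
  have hS := scOf_shortExact i f hif hi hf
  have h0 : (Abelian.Ext.mk₀ (a • 𝟙 M)).comp hS.extClass (zero_add 1) = 0 := by
    have := h hS.extClass
    have h1 : ∀ e : Abelian.Ext M K 1,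
        (Abelian.Ext.mk₀ (a • 𝟙 M)).comp e (zero_add 1) = a • e := by
      intro e
      rw [Abelian.Ext.mk₀_smul, Abelian.Ext.smul_comp, Abelian.Ext.mk₀_id_comp]
    exact (h1 _).trans (h _)
  obtain ⟨x, hx⟩ := Abelian.Ext.covariant_sequence_exact₃ M hS _ _ h0
  obtain ⟨s, rfl⟩ := (Abelian.Ext.mk₀_bijective M F).2 x
  have h2 : s ≫ ModuleCat.ofHom f = a • 𝟙 M := by
    apply (Abelian.Ext.mk₀_bijective M M).1
    rw [← hx]
    exact (Abelian.Ext.mk₀_comp_mk₀ s (ModuleCat.ofHom f)).symm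
  refine killsTor_of_factor s.hom f ?_
  exact congrArg ModuleCat.Hom.hom h2

lemma inter_of_killsTor {j : ℕ} {a : R} {I : Ideal R}
    (h : KillsTor j a (ModuleCat.of R (R ⧸ I))) {X L K F : ModuleCat.{0} R} (i : K →ₗ[R] F)
    (f : F →ₗ[R] L) (hX : IsSyzN R j X L) (hF : Module.Free R F) (hi : Function.Injective i)
    (hif : Function.Exact i f) (hf : Function.Surjective f) (z : K)
    (hz : i z ∈ I • (⊤ : Submodule R F)) : a • z ∈ I • (⊤ : Submodule R K) := by
  have e1 : ∀ (N : Type) [AddCommGroup N] [Module R N] (y : N),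
      (Ideal.Quotient.mk I 1 ⊗ₜ[R] y : (R ⧸ I) ⊗[R] N) = 0 ↔ y ∈ I • (⊤ : Submodule R N) := by
    intro N _ _ y
    rw [← (TensorProduct.quotTensorEquivQuotSMul N I).map_eq_zero_iff,
      TensorProduct.quotTensorEquivQuotSMul_mk_tmul, Submodule.Quotient.mk_eq_zero, one_smul]
  have h1 := h X L K F i f hX hF hi hif hf (Ideal.Quotient.mk I 1 ⊗ₜ[R] z) ((e1 F (i z)).mpr hz)
  rw [← e1]
  rw [TensorProduct.tmul_smul]
  exact h1

end tor


section locpart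
open TensorProduct

lemma free_of_inter {S : Type} [CommRing S] [IsLocalRing S] {K F M : Type} [AddCommGroup K]
    [AddCommGroup F] [AddCommGroup M] [Module S K] [Module S F] [Module S M] [Module.Finite S K]
    [Module.Finite S F] [Module.Free S F] (i : K →ₗ[S] F) (f : F →ₗ[S] M)
    (hif : Function.Exact i f) (hf : Function.Surjective f)
    (h : ∀ z : K, i z ∈ maximalIdeal S • (⊤ : Submodule S F) →
      z ∈ maximalIdeal S • (⊤ : Submodule S K)) : Module.Free S M := by
  refine Module.free_of_lTensor_residueField_injective i f hf hif ?_
  have e1 : ∀ (N : Type) [AddCommGroup N] [Module S N] (y : N),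
      (Ideal.Quotient.mk (maximalIdeal S) 1 ⊗ₜ[S] y : (S ⧸ maximalIdeal S) ⊗[S] N) = 0 ↔
        y ∈ (maximalIdeal S) • (⊤ : Submodule S N) := by
    intro N _ _ y
    rw [← (TensorProduct.quotTensorEquivQuotSMul N _).map_eq_zero_iff,
      TensorProduct.quotTensorEquivQuotSMul_mk_tmul, Submodule.Quotient.mk_eq_zero, one_smul]
  have e2 : ∀ t : (S ⧸ maximalIdeal S) ⊗[S] K,
      ∃ z, t = Ideal.Quotient.mk (maximalIdeal S) 1 ⊗ₜ[S] z := by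
    intro t
    induction t with
    | zero => exact ⟨0, by simp⟩
    | tmul x y =>
      obtain ⟨r, rfl⟩ := Ideal.Quotient.mk_surjective x
      refine ⟨r • y, ?_⟩
      rw [← TensorProduct.smul_tmul]
      congr 1
      change _ = Ideal.Quotient.mk (maximalIdeal S) (r * 1)
      rw [mul_one]
    | add x y hx hy =>
      obtain ⟨a, rfl⟩ := hx
      obtain ⟨b, rfl⟩ := hy
      exact ⟨a + b, (TensorProduct.tmul_add _ _ _).symm⟩
  change Function.Injective (LinearMap.lTensor (S ⧸ maximalIdeal S) i)
  rw [injective_iff_map_eq_zero]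
  intro t ht
  obtain ⟨z, rfl⟩ := e2 t
  rw [LinearMap.lTensor_tmul] at ht
  exact (e1 K z).mpr (h z ((e1 F _).mp ht))

variable {R : Type} [CommRing R]

lemma mem_max_smul_iff (p : Ideal R) [p.IsPrime] (N : Type) [AddCommGroup N] [Module R N]
    (x : LocalizedModule p.primeCompl N) :
    x ∈ maximalIdeal (Localization.AtPrime p) • (⊤ : Submodule (Localization.AtPrime p)
      (LocalizedModule p.primeCompl N)) ↔
    ∃ m ∈ p • (⊤ : Submodule R N), ∃ s : p.primeCompl, LocalizedModule.mk m s = x := by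
  have h := Submodule.localized'_smul (Localization p.primeCompl) p.primeCompl
    (LocalizedModule.mkLinearMap p.primeCompl N) (⊤ : Submodule R N) p
  rw [Ideal.localized'_eq_map, Submodule.localized'_top] at h
  have h2 : maximalIdeal (Localization.AtPrime p) • (⊤ : Submodule (Localization.AtPrime p)
      (LocalizedModule p.primeCompl N)) = (p • (⊤ : Submodule R N)).localized'
        (Localization p.primeCompl) p.primeCompl (LocalizedModule.mkLinearMap p.primeCompl N) := by
    rw [h, ← Localization.AtPrime.map_eq_maximalIdeal]
  rw [h2, Submodule.mem_localized']
  simp only [IsLocalizedModule.mk_eq_mk']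

lemma free_loc_of_inter [IsNoetherianRing R] (p : Ideal R) [p.IsPrime] {a : R} (ha : a ∉ p)
    {K F L : ModuleCat.{0} R}
    [Module.Finite R K] [Module.Finite R F] [Module.Free R F] (i : K →ₗ[R] F) (f : F →ₗ[R] L)
    (hif : Function.Exact i f) (hf : Function.Surjective f)
    (h : ∀ z : K, i z ∈ p • (⊤ : Submodule R F) → a • z ∈ p • (⊤ : Submodule R K)) :
    Module.Free (Localization.AtPrime p) (LocalizedModule p.primeCompl L) := by
  have := free_locMod p.primeCompl F
  refine free_of_inter (LocalizedModule.map p.primeCompl i) (LocalizedModule.map p.primeCompl f)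
    (LocalizedModule.map_exact _ _ _ hif) (LocalizedModule.map_surjective _ _ hf) ?_
  intro z hz
  induction z with
  | h z s =>
  rw [LocalizedModule.map_mk, mem_max_smul_iff] at hz
  obtain ⟨m, hm, t, hmt⟩ := hz
  rw [LocalizedModule.mk_eq] at hmt
  obtain ⟨u, hu⟩ := hmt
  have h1 : i ((u * t) • z) ∈ p • (⊤ : Submodule R F) := by
    have : i ((u * t) • z) = u • s • m := by
      rw [hu, ← mul_smul]; exact map_smul i ((u * t : p.primeCompl) : R) z
    rw [this]
    exact Submodule.smul_mem _ (u : R) (Submodule.smul_mem _ (s : R) hm)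
  have h2 := h _ h1
  rw [mem_max_smul_iff]
  obtain ⟨a', rfl⟩ : ∃ a' : p.primeCompl, (a' : R) = a := ⟨⟨a, ha⟩, rfl⟩
  refine ⟨_, h2, (a' * (u * t)) * s, ?_⟩
  rw [LocalizedModule.mk_eq]
  refine ⟨1, ?_⟩
  rw [one_smul, one_smul, mul_comm _ s, mul_smul s, mul_smul a']
  rfl

lemma krull_step [IsNoetherianRing R] [IsLocalRing R] (p : Ideal R) (K : Type) [AddCommGroup K]
    [Module R K] [Module.Finite R K] (y : K)
    (h : ∀ n : ℕ, y ∈ (p ⊔ maximalIdeal R ^ n) • (⊤ : Submodule R K)) :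
    y ∈ p • (⊤ : Submodule R K) := by
  have hk := Ideal.iInf_pow_smul_eq_bot_of_isLocalRing (M := K ⧸ (p • (⊤ : Submodule R K)))
    (maximalIdeal R) (Ideal.IsPrime.ne_top inferInstance)
  rw [← Submodule.Quotient.mk_eq_zero, ← Submodule.mem_bot R, ← hk, Submodule.mem_iInf]
  intro n
  have h1 := h n
  rw [Submodule.sup_smul, Submodule.mem_sup] at h1
  obtain ⟨u, hu, v, hv, rfl⟩ := h1
  rw [Submodule.Quotient.mk_add, (Submodule.Quotient.mk_eq_zero _).mpr hu, zero_add]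
  have := Submodule.mem_map_of_mem (f := (p • (⊤ : Submodule R K)).mkQ) hv
  rw [Submodule.map_smul''] at this
  exact Submodule.smul_mono le_rfl le_top this

lemma exists_free_syz [IsNoetherianRing R] [IsLocalRing R]
    (hCM : IsCMLocalRing R)
    (hprim : (⨅ (i : ℕ) (_ : 0 < i) (M : ModuleCat.{0} R) (_ : MemCM0 R M)
        (N : ModuleCat.{0} R) (_ : MemCM0 R N),
        Module.annihilator R (ExtMod R i M N)).radical = maximalIdeal R)
    (p : Ideal R) [p.IsPrime] (hp : p ≠ maximalIdeal R) :
    ∃ (d : ℕ) (L : ModuleCat.{0} R), IsSyzN R d (ModuleCat.of R (R ⧸ p)) L ∧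
      Module.Free (Localization.AtPrime p) (locM p L) := by
  obtain ⟨x, hxm, hxp⟩ : ∃ x ∈ maximalIdeal R, x ∉ p := by
    by_contra! hcon
    exact hp (le_antisymm (le_maximalIdeal (Ideal.IsPrime.ne_top inferInstance)) hcon)
  rw [← hprim, Ideal.mem_radical_iff] at hxm
  obtain ⟨k, hk⟩ := hxm
  have hap : x ^ k ∉ p := fun h => hxp (Ideal.IsPrime.mem_of_pow_mem inferInstance k h)
  generalize x ^ k = a at hk hap
  simp only [Submodule.mem_iInf] at hk
  obtain ⟨d, hd⟩ := exists_krullDim_eq_nat R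
  have hkill : ∀ n : ℕ, KillsTor d a (ModuleCat.of R (R ⧸ (p ⊔ maximalIdeal R ^ n))) := by
    intro n
    have hfin0 : Module.Finite R (ModuleCat.of R (R ⧸ (p ⊔ maximalIdeal R ^ n))) :=
      inferInstanceAs (Module.Finite R (R ⧸ (p ⊔ maximalIdeal R ^ n)))
    obtain ⟨M, hM⟩ := exists_isSyzN d (ModuleCat.of R (R ⧸ (p ⊔ maximalIdeal R ^ n)))
    have := hM.finite
    obtain ⟨K, hK⟩ := exists_isSyz M
    have hM0 := memCM0_of_isSyzN hCM hd.le _ n le_sup_right le_rfl hM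
    have hK0 := memCM0_of_isSyzN hCM hd.le _ n le_sup_right (Nat.le_succ d)
      (show IsSyzN R (d + 1) _ K from ⟨M, hM, hK⟩)
    have h1 := killsTor_of_ext hK
      ((mem_ann_extMod_iff' M K a 0).mp (hk 1 one_pos M hM0 K hK0))
    have h2 := h1.shiftN hM
    rwa [zero_add] at h2
  have hfp : Module.Finite R (ModuleCat.of R (R ⧸ p)) := inferInstanceAs (Module.Finite R (R ⧸ p))
  obtain ⟨L, hL⟩ := exists_isSyzN d (ModuleCat.of R (R ⧸ p))
  have := hL.finite
  obtain ⟨K, hK⟩ := exists_isSyz L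
  have hKf := hK.finite
  obtain ⟨F, i, f, hF, hFf, hi, hif, hf⟩ := hK
  refine ⟨d, L, hL, free_loc_of_inter p hap i f hif hf ?_⟩
  intro z hz
  refine krull_step p K _ fun n => ?_
  exact inter_of_killsTor (hkill n) i f hL hF hi hif hf z
    (Submodule.smul_mono le_sup_left le_rfl hz)

end locpart


section abs1
open scoped Pointwise

variable {S : Type} [CommRing S]

lemma pdle_zero_of_projective (F : ModuleCat.{0} S) [Module.Projective S F] :
    HasProjectiveDimensionLE F 0 := by
  have := ModuleCat.projective_of_categoryTheory_projective F
  exact (projective_iff_hasProjectiveDimensionLE_zero _).mp this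

lemma pdle_of_projective (F : ModuleCat.{0} S) [Module.Projective S F] (n : ℕ) :
    HasProjectiveDimensionLE F n := by
  have := pdle_zero_of_projective F
  exact hasProjectiveDimensionLT_of_ge F (0 + 1) (n + 1) (by omega)

lemma projective_of_pdle_zero (F : ModuleCat.{0} S) (h : HasProjectiveDimensionLE F 0) :
    Module.Projective S F :=
  (IsProjective.iff_projective F).mpr ((projective_iff_hasProjectiveDimensionLE_zero _).mpr h)

lemma IsSyz.pdle {N K : ModuleCat.{0} S} (hs : IsSyz S N K) {n : ℕ}
    (h : HasProjectiveDimensionLE N (n + 1)) : HasProjectiveDimensionLE K n := by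
  obtain ⟨F, i, f, hF, hFf, hi, hif, hf⟩ := hs
  exact (scOf_shortExact i f hif hi hf).hasProjectiveDimensionLT_X₁ (n + 1)
    (pdle_of_projective F n) h

lemma IsSyz.pdle_succ {N K : ModuleCat.{0} S} (hs : IsSyz S N K) {n : ℕ}
    (h : HasProjectiveDimensionLE K n) : HasProjectiveDimensionLE N (n + 1) := by
  obtain ⟨F, i, f, hF, hFf, hi, hif, hf⟩ := hs
  exact (scOf_shortExact i f hif hi hf).hasProjectiveDimensionLT_X₃ (n + 1) h
    (pdle_of_projective F (n + 1))

lemma IsSyzN.pdle {N K : ModuleCat.{0} S} {n : ℕ} (hs : IsSyzN S n N K) {j : ℕ}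
    (h : HasProjectiveDimensionLE K j) : HasProjectiveDimensionLE N (j + n) := by
  induction n generalizing K j with
  | zero => cases hs; exact h
  | succ n ih =>
    obtain ⟨L, hL, hK⟩ := hs
    have := ih hL (hK.pdle_succ h)
    rwa [show j + (n + 1) = j + 1 + n by omega]

lemma free_of_pdle_of_socle [IsNoetherianRing S] [IsLocalRing S] (s : S) (hs0 : s ≠ 0)
    (hs : ∀ y ∈ maximalIdeal S, s * y = 0) (n : ℕ) (M : ModuleCat.{0} S) [Module.Finite S M]
    (h : HasProjectiveDimensionLE M n) : Module.Free S M := by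
  induction n generalizing M with
  | zero =>
    have := projective_of_pdle_zero M h
    exact free_of_proj_loc M
  | succ n ih =>
    obtain ⟨K, hK⟩ := exists_isSyz M
    have hKf := hK.finite
    have hKfree := ih K (hK.pdle h)
    obtain ⟨F, i, f, hF, hFf, hi, hif, hf⟩ := hK
    refine free_of_inter i f hif hf ?_
    intro z hz
    have h1 : ∀ w ∈ maximalIdeal S • (⊤ : Submodule S F), s • w = 0 := by
      intro w hw
      refine Submodule.smul_induction_on hw ?_ ?_
      · intro r hr m _
        rw [← mul_smul, hs r hr, zero_smul]
      · intro a b ha hb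
        rw [smul_add, ha, hb, add_zero]
    have h2 : s • z = 0 := by
      apply hi
      rw [map_smul, h1 _ hz, map_zero]
    let b := Module.Free.chooseBasis S K
    rw [← b.sum_repr z]
    refine Submodule.sum_mem _ fun j _ => Submodule.smul_mem_smul ?_ trivial
    rw [mem_maximalIdeal, mem_nonunits_iff]
    intro hu
    have h3 : s * b.repr z j = 0 := by
      have := congrArg (fun t => b.repr t j) h2
      simpa using this
    exact hs0 ((hu.mul_left_eq_zero).mp h3)

lemma socle_case [IsNoetherianRing S] [IsLocalRing S] (s : S) (hs0 : s ≠ 0)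
    (hs : ∀ y ∈ maximalIdeal S, s * y = 0) (n : ℕ)
    (h : HasProjectiveDimensionLE (ModuleCat.of S (S ⧸ maximalIdeal S)) n) :
    maximalIdeal S = ⊥ := by
  have hfin : Module.Finite S (ModuleCat.of S (S ⧸ maximalIdeal S)) :=
    inferInstanceAs (Module.Finite S (S ⧸ maximalIdeal S))
  have hfree : Module.Free S (S ⧸ maximalIdeal S) := free_of_pdle_of_socle s hs0 hs n _ h
  have hnt : Nontrivial (S ⧸ maximalIdeal S) :=
    Ideal.Quotient.nontrivial_iff.mpr (Ideal.IsPrime.ne_top inferInstance)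
  rw [eq_bot_iff]
  intro y hy
  have : y ∈ Module.annihilator S (S ⧸ maximalIdeal S) := by rwa [Ideal.annihilator_quotient]
  rwa [Module.annihilator_eq_bot.mpr inferInstance] at this

/-- reduction mod x -/
def quotM (x : S) (M : ModuleCat.{0} S) : ModuleCat.{0} (S ⧸ Ideal.span {x}) :=
  ModuleCat.of (S ⧸ Ideal.span {x}) (QuotSMulTop x M)

lemma pdle_quot [IsNoetherianRing S] [IsLocalRing S] (x : S) (hx : IsSMulRegular S x)
    (n : ℕ) (M : ModuleCat.{0} S) [Module.Finite S M] (hM : IsSMulRegular M x)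
    (h : HasProjectiveDimensionLE M n) : HasProjectiveDimensionLE (quotM x M) n := by
  induction n generalizing M with
  | zero =>
    have := projective_of_pdle_zero M h
    have := free_of_proj_loc M
    have : Module.Free (S ⧸ Ideal.span {x}) (quotM x M) :=
      inferInstanceAs (Module.Free _ (QuotSMulTop x M))
    have : Module.Projective (S ⧸ Ideal.span {x}) (quotM x M) := Module.Projective.of_free
    exact pdle_zero_of_projective _
  | succ n ih =>
    obtain ⟨K, hK⟩ := exists_isSyz M
    have hKf := hK.finite
    have hp := hK.pdle h
    obtain ⟨F, i, f, hF, hFf, hi, hif, hf⟩ := hK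
    have hFx : IsSMulRegular F x := by
      rw [isSMulRegular_iff_right_eq_zero_of_smul]
      intro w hw
      let b := Module.Free.chooseBasis S F
      apply b.repr.injective
      ext j
      have : x • b.repr w j = 0 := by
        have := congrArg (fun t => b.repr t j) hw
        simpa using this
      simpa using hx.right_eq_zero_of_smul this
    have hKx : IsSMulRegular K x := hFx.of_injective i hi
    have hsurj : Function.Surjective (algebraMap S (S ⧸ Ideal.span {x})) :=
      Ideal.Quotient.mk_surjective
    let i' : QuotSMulTop x K →ₗ[S ⧸ Ideal.span {x}] QuotSMulTop x F :=
      LinearMap.extendScalarsOfSurjective hsurj (QuotSMulTop.map x i)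
    let f' : QuotSMulTop x F →ₗ[S ⧸ Ideal.span {x}] QuotSMulTop x M :=
      LinearMap.extendScalarsOfSurjective hsurj (QuotSMulTop.map x f)
    refine IsSyz.pdle_succ (K := quotM x K) ⟨quotM x F, i', f', ?_, ?_, ?_, ?_, ?_⟩
      (ih K hKx hp)
    · exact inferInstanceAs (Module.Free _ (QuotSMulTop x F))
    · exact Module.Finite.of_restrictScalars_finite S (S ⧸ Ideal.span {x}) (QuotSMulTop x F)
    · change Function.Injective (QuotSMulTop.map x i)
      rw [injective_iff_map_eq_zero]
      intro z hz
      obtain ⟨z, rfl⟩ := Submodule.Quotient.mk_surjective _ z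
      change Submodule.Quotient.mk (i z) = 0 at hz
      rw [Submodule.Quotient.mk_eq_zero] at hz ⊢
      obtain ⟨w, _, hw⟩ := (Submodule.mem_smul_pointwise_iff_exists _ _ _).mp hz
      have h1 : f w = 0 := by
        apply hM.right_eq_zero_of_smul
        rw [← map_smul, hw]
        exact hif.apply_apply_eq_zero z
      obtain ⟨v, rfl⟩ := (hif w).mp h1
      rw [← map_smul] at hw
      rw [← hi hw]
      exact Submodule.smul_mem_pointwise_smul _ _ _ trivial
    · exact QuotSMulTop.map_exact x hif hf
    · exact QuotSMulTop.map_surjective x hf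

end abs1


section abs2
open scoped Pointwise

lemma exists_good_element {S : Type} [CommRing S] [IsNoetherianRing S] [IsLocalRing S]
    (hns : ¬ ∃ s : S, s ≠ 0 ∧ ∀ y ∈ maximalIdeal S, s * y = 0) :
    ∃ x ∈ maximalIdeal S, x ∉ maximalIdeal S ^ 2 ∧ IsSMulRegular S x := by
  classical
  by_contra hcon
  push Not at hcon
  have hfin := associatedPrimes.finite S S
  have key := (Ideal.subset_union_prime (s := insert (maximalIdeal S ^ 2) hfin.toFinset)
    (f := id) (maximalIdeal S ^ 2) (maximalIdeal S ^ 2) (I := maximalIdeal S) (by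
      intro i hi h1 _
      rcases Finset.mem_insert.mp hi with h | h
      · exact absurd h h1
      · exact ((Set.Finite.mem_toFinset _).mp h).isPrime)).mp (by
      intro x hx
      by_cases h2 : x ∈ maximalIdeal S ^ 2
      · exact Set.mem_biUnion (by simp) h2
      · have h3 := hcon x hx h2
        have h4 : x ∈ {r : S | IsSMulRegular S r}ᶜ := h3
        rw [← biUnion_associatedPrimes_eq_compl_regular] at h4
        obtain ⟨P, hP, hxP⟩ := Set.mem_iUnion₂.mp h4
        exact Set.mem_biUnion (x := P) (by simp [hP]) hxP)
  obtain ⟨P, hP, hle⟩ := key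
  apply hns
  rcases Finset.mem_insert.mp hP with h | h
  · subst h
    have hb : maximalIdeal S = ⊥ := by
      apply Submodule.eq_bot_of_le_smul_of_le_jacobson_bot (maximalIdeal S) (maximalIdeal S)
        (IsNoetherian.noetherian _)
      · rw [smul_eq_mul, ← pow_two]; exact hle
      · exact (IsLocalRing.jacobson_eq_maximalIdeal ⊥ bot_ne_top).ge
    refine ⟨1, one_ne_zero, fun y hy => ?_⟩
    rw [hb] at hy
    simpa using hy
  · have h := (Set.Finite.mem_toFinset _).mp h
    rw [AssociatedPrimes.mem_iff, isAssociatedPrime_iff] at h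
    obtain ⟨hpr, z, rfl⟩ := h
    refine ⟨z, ?_, fun y hy => ?_⟩
    · rintro rfl
      exact hpr.ne_top (by simp)
    · have := hle hy
      simpa [Submodule.mem_colon_singleton, mul_comm] using this

lemma isSyz_maximal (S : Type) [CommRing S] [IsNoetherianRing S] [IsLocalRing S] :
    IsSyz S (ModuleCat.of S (S ⧸ maximalIdeal S)) (ModuleCat.of S (maximalIdeal S)) := by
  refine ⟨ModuleCat.of S S, (maximalIdeal S).subtype, (maximalIdeal S).mkQ,
    inferInstanceAs (Module.Free S S), inferInstanceAs (Module.Finite S S),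
    Subtype.val_injective, ?_, Submodule.mkQ_surjective _⟩
  rw [LinearMap.exact_iff]
  simp

lemma pd_of_split {A : Type} [CommRing A] (I : Ideal A) (M : ModuleCat.{0} A) (e : M)
    (he : ∀ y ∈ I, y • e = 0) (β : M →ₗ[A] (A ⧸ I)) (hβ : β e = 1) (n : ℕ)
    (h : HasProjectiveDimensionLE M n) :
    HasProjectiveDimensionLE (ModuleCat.of A (A ⧸ I)) n := by
  let α : (A ⧸ I) →ₗ[A] M := I.liftQ (LinearMap.toSpanSingleton A _ e) (by
    intro y hy
    exact he y hy)
  have hαβ : β ∘ₗ α = LinearMap.id := by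
    apply LinearMap.ext
    intro z
    obtain ⟨t, rfl⟩ := Ideal.Quotient.mk_surjective z
    change β (t • e) = _
    rw [map_smul, hβ, Algebra.smul_def, mul_one]
    rfl
  have r : Retract (ModuleCat.of A (A ⧸ I)) M :=
    { i := ModuleCat.ofHom α
      r := ModuleCat.ofHom β
      retract := congrArg ModuleCat.ofHom hαβ }
  exact r.hasProjectiveDimensionLT (n + 1)

lemma retract_pd {S : Type} [CommRing S] [IsNoetherianRing S] [IsLocalRing S] (x : S)
    (hx : x ∈ maximalIdeal S) (hx2 : x ∉ maximalIdeal S ^ 2)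
    [IsLocalRing (S ⧸ Ideal.span {x})] (n : ℕ)
    (h : HasProjectiveDimensionLE (quotM x (ModuleCat.of S (maximalIdeal S))) n) :
    HasProjectiveDimensionLE (ModuleCat.of (S ⧸ Ideal.span {x})
      ((S ⧸ Ideal.span {x}) ⧸ maximalIdeal (S ⧸ Ideal.span {x}))) n := by
  have hsurj : Function.Surjective (algebraMap S (S ⧸ Ideal.span {x})) :=
    Ideal.Quotient.mk_surjective
  have hmem : ∀ y : S, y ∈ maximalIdeal S →
      Ideal.Quotient.mk (Ideal.span {x}) y ∈ maximalIdeal (S ⧸ Ideal.span {x}) := by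
    intro y hy
    have : IsLocalHom (Ideal.Quotient.mk (Ideal.span {x})) :=
      IsLocalHom.of_surjective _ Ideal.Quotient.mk_surjective
    rw [mem_maximalIdeal, mem_nonunits_iff] at hy ⊢
    exact fun hu => hy (isUnit_of_map_unit _ _ hu)
  have hmem' : ∀ y : S, Ideal.Quotient.mk (Ideal.span {x}) y ∈ maximalIdeal (S ⧸ Ideal.span {x}) →
      y ∈ maximalIdeal S := by
    intro y hy
    rw [mem_maximalIdeal, mem_nonunits_iff] at hy ⊢
    exact fun hu => hy (hu.map _)
  have hc : (maximalIdeal S).toCotangent ⟨x, hx⟩ ≠ 0 := by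
    rw [Ne, Ideal.toCotangent_eq_zero]; exact hx2
  obtain ⟨φ, hφ⟩ := Module.Projective.exists_dual_eq_one (ResidueField S) (V := CotangentSpace S) hc
  let h0 : (S ⧸ maximalIdeal S) →ₗ[S] ((S ⧸ Ideal.span {x}) ⧸ maximalIdeal (S ⧸ Ideal.span {x})) :=
    (maximalIdeal S).liftQ (Algebra.linearMap S _) (by
      intro y hy
      rw [LinearMap.mem_ker]
      change Ideal.Quotient.mk _ (Ideal.Quotient.mk _ y) = 0
      rw [Ideal.Quotient.eq_zero_iff_mem]
      exact hmem y hy)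
  let g : maximalIdeal S →ₗ[S] (S ⧸ maximalIdeal S) :=
    (φ.restrictScalars S) ∘ₗ (maximalIdeal S).toCotangent
  let b0 : QuotSMulTop x (maximalIdeal S) →ₗ[S]
      ((S ⧸ Ideal.span {x}) ⧸ maximalIdeal (S ⧸ Ideal.span {x})) :=
    Submodule.liftQ _ (h0 ∘ₗ g) (by
      intro y hy
      obtain ⟨w, _, rfl⟩ := (Submodule.mem_smul_pointwise_iff_exists _ _ _).mp hy
      rw [LinearMap.mem_ker, map_smul]
      obtain ⟨t, ht⟩ := Ideal.Quotient.mk_surjective ((h0 ∘ₗ g) w)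
      obtain ⟨t, rfl⟩ := Ideal.Quotient.mk_surjective t
      rw [← ht]
      change Ideal.Quotient.mk _ (Ideal.Quotient.mk _ (x * t)) = 0
      rw [Ideal.Quotient.eq_zero_iff_mem]
      exact hmem _ (Ideal.mul_mem_right _ _ hx))
  let β : QuotSMulTop x (maximalIdeal S) →ₗ[S ⧸ Ideal.span {x}]
      ((S ⧸ Ideal.span {x}) ⧸ maximalIdeal (S ⧸ Ideal.span {x})) :=
    LinearMap.extendScalarsOfSurjective hsurj b0
  let e : QuotSMulTop x (maximalIdeal S) := Submodule.Quotient.mk ⟨x, hx⟩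
  have he : β e = 1 := by
    change h0 (φ ((maximalIdeal S).toCotangent ⟨x, hx⟩)) = 1
    rw [hφ]
    rfl
  refine pd_of_split (maximalIdeal (S ⧸ Ideal.span {x}))
    (quotM x (ModuleCat.of S (maximalIdeal S))) e ?_ β he n h
  intro y hy
  obtain ⟨y, rfl⟩ := Ideal.Quotient.mk_surjective y
  change Submodule.Quotient.mk (y • (⟨x, hx⟩ : maximalIdeal S)) = 0
  rw [Submodule.Quotient.mk_eq_zero]
  have : y • (⟨x, hx⟩ : maximalIdeal S) = x • (⟨y, hmem' y hy⟩ : maximalIdeal S) := by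
    ext; exact mul_comm _ _
  rw [this]
  exact Submodule.smul_mem_pointwise_smul _ _ _ trivial

theorem abs_main (d : ℕ) : ∀ (S : Type) [CommRing S] [IsNoetherianRing S] [IsLocalRing S]
    (n : ℕ), ringKrullDim S = ((d : ℕ∞) : WithBot ℕ∞) →
    HasProjectiveDimensionLE (ModuleCat.of S (S ⧸ maximalIdeal S)) n →
    ∃ s : Finset S, Ideal.span (s : Set S) = maximalIdeal S ∧ s.card ≤ d := by
  classical
  induction d with
  | zero =>
    intro S _ _ _ n hd hn
    by_cases hns : ∃ s : S, s ≠ 0 ∧ ∀ y ∈ maximalIdeal S, s * y = 0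
    · obtain ⟨s, hs0, hs⟩ := hns
      exact ⟨∅, by simp [socle_case s hs0 hs n hn], by simp⟩
    · obtain ⟨x, hx, hx2, hreg⟩ := exists_good_element hns
      have h1 := ringKrullDim_quotient_span_singleton_succ_eq_ringKrullDim hreg hx
      have : Nontrivial (S ⧸ Ideal.span {x}) :=
        Ideal.Quotient.nontrivial_iff.mpr fun h => (Ideal.IsPrime.ne_top
          (inferInstanceAs (maximalIdeal S).IsPrime)) (top_le_iff.mp (h ▸ (Ideal.span_singleton_le_iff_mem _).mpr hx))
      have : IsLocalRing (S ⧸ Ideal.span {x}) :=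
        IsLocalRing.of_surjective' (Ideal.Quotient.mk (Ideal.span {x})) Ideal.Quotient.mk_surjective
      obtain ⟨e, he⟩ := exists_krullDim_eq_nat (S ⧸ Ideal.span {x})
      rw [he, hd] at h1
      have : e + 1 = 0 := by exact_mod_cast h1
      omega
  | succ d ih =>
    intro S _ _ _ n hd hn
    by_cases hns : ∃ s : S, s ≠ 0 ∧ ∀ y ∈ maximalIdeal S, s * y = 0
    · obtain ⟨s, hs0, hs⟩ := hns
      exact ⟨∅, by simp [socle_case s hs0 hs n hn], by simp⟩
    · obtain ⟨x, hx, hx2, hreg⟩ := exists_good_element hns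
      have h1 := ringKrullDim_quotient_span_singleton_succ_eq_ringKrullDim hreg hx
      have : Nontrivial (S ⧸ Ideal.span {x}) :=
        Ideal.Quotient.nontrivial_iff.mpr fun h => (Ideal.IsPrime.ne_top
          (inferInstanceAs (maximalIdeal S).IsPrime)) (top_le_iff.mp (h ▸ (Ideal.span_singleton_le_iff_mem _).mpr hx))
      have : IsLocalRing (S ⧸ Ideal.span {x}) :=
        IsLocalRing.of_surjective' (Ideal.Quotient.mk (Ideal.span {x})) Ideal.Quotient.mk_surjective
      obtain ⟨e, he⟩ := exists_krullDim_eq_nat (S ⧸ Ideal.span {x})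
      rw [he, hd] at h1
      have hed : e + 1 = d + 1 := by exact_mod_cast h1
      obtain rfl : e = d := by omega
      have hn' : HasProjectiveDimensionLE (ModuleCat.of S (S ⧸ maximalIdeal S)) (n + 1) :=
        hasProjectiveDimensionLT_of_ge _ (n + 1) (n + 1 + 1) (by omega)
      have hm := (isSyz_maximal S).pdle hn'
      have hmf : Module.Finite S (ModuleCat.of S (maximalIdeal S)) :=
        inferInstanceAs (Module.Finite S (maximalIdeal S))
      have hmreg : IsSMulRegular (ModuleCat.of S (maximalIdeal S)) x :=
        hreg.of_injective (maximalIdeal S).subtype Subtype.val_injective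
      have hq := pdle_quot x hreg n _ hmreg hm
      obtain ⟨s, hs, hcard⟩ := ih _ n he (retract_pd x hx hx2 n hq)
      choose l hl using (Ideal.Quotient.mk_surjective (I := Ideal.span {x}))
      refine ⟨insert x (s.image l), ?_, ?_⟩
      · apply le_antisymm
        · rw [Ideal.span_le]
          intro y hy
          rcases Finset.mem_insert.mp (Finset.mem_coe.mp hy) with rfl | hy
          · exact hx
          · obtain ⟨z, hz, rfl⟩ := Finset.mem_image.mp hy
            have h2 : z ∈ maximalIdeal (S ⧸ Ideal.span {x}) := hs ▸ Ideal.subset_span hz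
            rw [← hl z] at h2
            change _ ∈ maximalIdeal S
            rw [mem_maximalIdeal, mem_nonunits_iff] at h2 ⊢
            exact fun hu => h2 (hu.map _)
        · intro y hy
          have h3 : (Ideal.span ((s.image l : Finset S) : Set S)).map
              (Ideal.Quotient.mk (Ideal.span {x})) = maximalIdeal (S ⧸ Ideal.span {x}) := by
            rw [Ideal.map_span, ← hs]
            congr 1
            ext z
            simp [hl]
          have h4 : Ideal.Quotient.mk (Ideal.span {x}) y ∈ maximalIdeal (S ⧸ Ideal.span {x}) := by
            have : IsLocalHom (Ideal.Quotient.mk (Ideal.span {x})) :=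
              IsLocalHom.of_surjective _ Ideal.Quotient.mk_surjective
            rw [mem_maximalIdeal, mem_nonunits_iff] at hy ⊢
            exact fun hu => hy (isUnit_of_map_unit _ _ hu)
          rw [← h3, Ideal.mem_map_iff_of_surjective _ Ideal.Quotient.mk_surjective] at h4
          obtain ⟨t, ht, hty⟩ := h4
          rw [Ideal.Quotient.eq] at hty
          rw [Finset.coe_insert, Ideal.span_insert, ← sub_sub_cancel t y]
          refine Ideal.sub_mem _ (Ideal.mem_sup_right ht) (Ideal.mem_sup_left hty)
      · exact (Finset.card_insert_le _ _).trans (Nat.succ_le_succ (Finset.card_image_le.trans hcard))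

end abs2

section final

lemma locM_residue_pd {R : Type} [CommRing R] (p : Ideal R) [p.IsPrime] (n : ℕ)
    (h : HasProjectiveDimensionLE (locM p (ModuleCat.of R (R ⧸ p))) n) :
    HasProjectiveDimensionLE (ModuleCat.of (Localization.AtPrime p)
      (Localization.AtPrime p ⧸ maximalIdeal (Localization.AtPrime p))) n := by
  let e : LocalizedModule p.primeCompl (R ⧸ p) := LocalizedModule.mk 1 1
  let f : Localization.AtPrime p →ₗ[Localization.AtPrime p] LocalizedModule p.primeCompl (R ⧸ p) :=
    LinearMap.toSpanSingleton _ _ e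
  have hsurj : Function.Surjective f := by
    intro y
    induction y using LocalizedModule.induction_on with
    | h m s =>
      obtain ⟨r, rfl⟩ := Ideal.Quotient.mk_surjective m
      refine ⟨Localization.mk r s, ?_⟩
      change Localization.mk r s • LocalizedModule.mk (1 : R ⧸ p) (1 : p.primeCompl) = _
      rw [LocalizedModule.mk_smul_mk, mul_one]
      congr 1
      rw [← map_one (Ideal.Quotient.mk p)]
      change Ideal.Quotient.mk p (r * 1) = _
      rw [mul_one]
  have hker : LinearMap.ker f = maximalIdeal (Localization.AtPrime p) := by
    have h1 : maximalIdeal (Localization.AtPrime p) ≤ LinearMap.ker f := by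
      rw [← Localization.AtPrime.map_eq_maximalIdeal, Ideal.map_le_iff_le_comap]
      intro r hr
      rw [Ideal.mem_comap, LinearMap.mem_ker]
      change algebraMap R (Localization.AtPrime p) r • LocalizedModule.mk (1 : R ⧸ p) (1 : p.primeCompl) = 0
      rw [algebraMap_smul, LocalizedModule.smul'_mk]
      have : r • (1 : R ⧸ p) = 0 := by
        rw [Algebra.smul_def, mul_one]
        exact Ideal.Quotient.eq_zero_iff_mem.mpr hr
      rw [this, LocalizedModule.zero_mk]
    refine ((maximalIdeal.isMaximal (Localization.AtPrime p)).eq_of_le ?_ h1).symm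
    intro htop
    have h2 : (1 : Localization.AtPrime p) ∈ LinearMap.ker f := htop ▸ Submodule.mem_top
    rw [LinearMap.mem_ker] at h2
    change (1 : Localization.AtPrime p) • e = 0 at h2
    rw [one_smul] at h2
    obtain ⟨u, hu⟩ := (LocalizedModule.mk_eq (m := (1 : R ⧸ p)) (m' := 0)
      (s := (1 : p.primeCompl)) (s' := 1)).mp (h2.trans (LocalizedModule.zero_mk 1).symm)
    simp only [one_smul, smul_zero] at hu
    have h3 : Ideal.Quotient.mk p (u : R) = 0 := by
      have h4 : (u : R) • (1 : R ⧸ p) = 0 := hu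
      rwa [Algebra.smul_def, mul_one] at h4
    exact u.2 (Ideal.Quotient.eq_zero_iff_mem.mp h3)
  let E : LocalizedModule p.primeCompl (R ⧸ p) ≃ₗ[Localization.AtPrime p]
      (Localization.AtPrime p ⧸ maximalIdeal (Localization.AtPrime p)) :=
    ((Submodule.quotEquivOfEq _ _ hker.symm).trans (f.quotKerEquivOfSurjective hsurj)).symm
  exact hasProjectiveDimensionLT_of_iso (X := locM p (ModuleCat.of R (R ⧸ p)))
    (LinearEquiv.toModuleIso E) (n + 1)

theorem regular_of_pd (S : Type) [CommRing S] [IsNoetherianRing S] [IsLocalRing S] (n : ℕ)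
    (h : HasProjectiveDimensionLE (ModuleCat.of S (S ⧸ maximalIdeal S)) n) :
    IsRegularLocal S := by
  refine ⟨inferInstance, ?_⟩
  obtain ⟨d, hd⟩ := exists_krullDim_eq_nat S
  obtain ⟨s, hs, hc⟩ := abs_main d S n hd h
  refine ⟨s, hs, le_antisymm ?_ ?_⟩
  · rw [hd]; exact_mod_cast hc
  · refine (ringKrullDim_le_spanFinrank_maximalIdeal (R := S)).trans ?_
    rw [← hs]
    have := Submodule.spanFinrank_span_le_ncard_of_finite (R := S) (s := (s : Set S)) s.finite_toSet
    rw [Set.ncard_coe_finset] at this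
    exact_mod_cast this

end final

/-- Let `R` be a Cohen-Macaulay noetherian local ring with maximal ideal
`m`. If `⋂_{i>0, M,N ∈ CM₀(R)} Ann Ext^i(M,N)` is `m`-primary, then `R` is an isolated
singularity. -/
theorem stmt18 (R : Type) [CommRing R] [IsNoetherianRing R] [IsLocalRing R]
    (hCM : IsCMLocalRing R)
    (hprim : (⨅ (i : ℕ) (_ : 0 < i) (M : ModuleCat.{0} R) (_ : MemCM0 R M)
        (N : ModuleCat.{0} R) (_ : MemCM0 R N),
        Module.annihilator R (ExtMod R i M N)).radical = maximalIdeal R) :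
    ∀ (p : Ideal R) [p.IsPrime], p ≠ maximalIdeal R →
      IsRegularLocal (Localization.AtPrime p) := by
  intro p _ hp
  obtain ⟨d, L, hL, hfree⟩ := exists_free_syz hCM hprim p hp
  have : IsNoetherianRing (Localization.AtPrime p) :=
    IsLocalization.isNoetherianRing p.primeCompl _ inferInstance
  have hproj : Module.Projective (Localization.AtPrime p) (locM p L) := Module.Projective.of_free
  have h1 := (hL.loc p).pdle (pdle_zero_of_projective (locM p L))
  exact regular_of_pd _ _ (locM_residue_pd p _ h1)

end
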